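/- Let g : D → ℂ' be smooth with 1 + |g|² invertible, and set ν = (1/(1+|g|²))·(g+ḡ, j(g−ḡ), 1−|g|²) : D → 𝕊²₁ ⊂ ℝ³ (signature (+,−,+)). Then ν_{zz̄} is a real-scalar multiple of ν at every point if and only if g satisfies g_{zz̄} − (2ḡ/(1+|g|²))g_z g_z̄ = 0 and its conjugate equation. -/

import Mathlib

noncomputable section

/-- Paracomplex numbers `z = x + jy` with `j² = 1`, represented as pairs `(x, y)`. -/
abbrev PC := ℝ × ℝ

/-- Paracomplex multiplication: `(x + jy)(u + jv) = (xu + yv) + j(xv + yu)`. -/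
def pmul (z w : PC) : PC := (z.1 * w.1 + z.2 * w.2, z.1 * w.2 + z.2 * w.1)

/-- Paracomplex conjugation `z̄ = x − jy`. -/
def pconj (z : PC) : PC := (z.1, -z.2)

/-- Squared modulus `|z|² = z·z̄ = x² − y²`. -/
def pnormSq (z : PC) : ℝ := z.1 ^ 2 - z.2 ^ 2

/-- The paracomplex unit `j`. -/
def pj : PC := (0, 1)

/-- The paracomplex unit `1`. -/
def pone : PC := (1, 0)

/-- Partial derivative in the `x` direction. -/
def dX (f : PC → PC) (p : PC) : PC := fderiv ℝ f p (1, 0)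

/-- Partial derivative in the `y` direction. -/
def dY (f : PC → PC) (p : PC) : PC := fderiv ℝ f p (0, 1)

/-- Para-Wirtinger derivative `f_z = (f_x + j f_y)/2`. -/
def Dz (f : PC → PC) (p : PC) : PC := (1/2 : ℝ) • (dX f p + pmul pj (dY f p))

/-- Para-Wirtinger derivative `f_z̄ = (f_x − j f_y)/2`. -/
def Dzbar (f : PC → PC) (p : PC) : PC := (1/2 : ℝ) • (dX f p - pmul pj (dY f p))

/-- The Gauss map `ν = (1/(1+|g|²))·(g+ḡ, j(g−ḡ), 1−|g|²)` with paracomplex-valued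
components. -/
def nuC (g : PC → PC) (p : PC) : Fin 3 → PC :=
  (1 / (1 + pnormSq (g p))) •
    ![g p + pconj (g p), pmul pj (g p - pconj (g p)), ((1 - pnormSq (g p), 0) : PC)]

/-- The vector `(1−ḡ², j(1+ḡ²), −2ḡ)`. -/
def V1 (g : PC → PC) (p : PC) : Fin 3 → PC :=
  ![pone - pmul (pconj (g p)) (pconj (g p)),
    pmul pj (pone + pmul (pconj (g p)) (pconj (g p))),
    (-2 : ℝ) • pconj (g p)]

/-- The vector `(1−g², −j(1+g²), −2g)`. -/
def V2 (g : PC → PC) (p : PC) : Fin 3 → PC :=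
  ![pone - pmul (g p) (g p),
    -(pmul pj (pone + pmul (g p) (g p))),
    (-2 : ℝ) • g p]

/-- Pure second directional derivative of a real function on the paracomplex plane. -/
def secondDeriv (e : PC) (a : PC → ℝ) (p : PC) : ℝ :=
  fderiv ℝ (fun q => fderiv ℝ a q e) p e

/-- The wave operator `∂_x² − ∂_y²`. -/
def waveOp (a : PC → ℝ) (p : PC) : ℝ :=
  secondDeriv (1, 0) a p - secondDeriv (0, 1) a p

/-- Polarised Lorentzian energy `a_x b_x − a_y b_y`. -/
def gradForm (a b : PC → ℝ) (p : PC) : ℝ :=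
  fderiv ℝ a p (1, 0) * fderiv ℝ b p (1, 0) - fderiv ℝ a p (0, 1) * fderiv ℝ b p (0, 1)

lemma contDiff_fderiv_apply_const {a : PC → ℝ} (ha : ContDiff ℝ (⊤ : ℕ∞) a) (e : PC) :
    ContDiff ℝ (⊤ : ℕ∞) (fun q => fderiv ℝ a q e) :=
  (ha.fderiv_right (m := (⊤ : ℕ∞)) (by simp)).clm_apply contDiff_const

lemma ContDiff.differentiable_of_top {a : PC → ℝ} (ha : ContDiff ℝ (⊤ : ℕ∞) a) :
    Differentiable ℝ a :=
  ha.differentiable (by simp)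

lemma fderiv_mul_apply {a b : PC → ℝ} (ha : ContDiff ℝ (⊤ : ℕ∞) a)
    (hb : ContDiff ℝ (⊤ : ℕ∞) b) (p e : PC) :
    fderiv ℝ (fun q => a q * b q) p e = a p * fderiv ℝ b p e + b p * fderiv ℝ a p e := by
  rw [fderiv_fun_mul (ha.differentiable_of_top p) (hb.differentiable_of_top p)]
  simp

lemma fderiv_add_apply {a b : PC → ℝ} (ha : ContDiff ℝ (⊤ : ℕ∞) a)
    (hb : ContDiff ℝ (⊤ : ℕ∞) b) (p e : PC) :
    fderiv ℝ (fun q => a q + b q) p e = fderiv ℝ a p e + fderiv ℝ b p e := by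
  rw [fderiv_fun_add (ha.differentiable_of_top p) (hb.differentiable_of_top p)]
  simp

lemma secondDeriv_mul {a b : PC → ℝ} (ha : ContDiff ℝ (⊤ : ℕ∞) a)
    (hb : ContDiff ℝ (⊤ : ℕ∞) b) (p e : PC) :
    secondDeriv e (fun q => a q * b q) p = a p * secondDeriv e b p
      + 2 * (fderiv ℝ a p e * fderiv ℝ b p e) + b p * secondDeriv e a p := by
  have ha' := contDiff_fderiv_apply_const ha e
  have hb' := contDiff_fderiv_apply_const hb e
  unfold secondDeriv
  simp_rw [fderiv_mul_apply ha hb]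
  rw [fderiv_add_apply (ha.mul hb') (hb.mul ha'), fderiv_mul_apply ha hb',
    fderiv_mul_apply hb ha']
  ring

lemma waveOp_mul {a b : PC → ℝ} (ha : ContDiff ℝ (⊤ : ℕ∞) a)
    (hb : ContDiff ℝ (⊤ : ℕ∞) b) (p : PC) :
    waveOp (fun q => a q * b q) p =
      a p * waveOp b p + 2 * gradForm a b p + b p * waveOp a p := by
  unfold waveOp gradForm
  rw [secondDeriv_mul ha hb, secondDeriv_mul ha hb]
  ring

lemma waveOp_add {a b : PC → ℝ} (ha : ContDiff ℝ (⊤ : ℕ∞) a)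
    (hb : ContDiff ℝ (⊤ : ℕ∞) b) (p : PC) :
    waveOp (fun q => a q + b q) p = waveOp a p + waveOp b p := by
  unfold waveOp secondDeriv
  simp_rw [fderiv_add_apply ha hb]
  rw [fderiv_add_apply (contDiff_fderiv_apply_const ha _) (contDiff_fderiv_apply_const hb _),
    fderiv_add_apply (contDiff_fderiv_apply_const ha _) (contDiff_fderiv_apply_const hb _)]
  ring

lemma waveOp_const (c : ℝ) (p : PC) : waveOp (fun _ => c) p = 0 := by
  simp [waveOp, secondDeriv]

lemma gradForm_comm (a b : PC → ℝ) (p : PC) : gradForm a b p = gradForm b a p := by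
  unfold gradForm; ring

lemma gradForm_const (a : PC → ℝ) (c : ℝ) (p : PC) : gradForm a (fun _ => c) p = 0 := by
  simp [gradForm]

lemma gradForm_add_right (a : PC → ℝ) {b c : PC → ℝ} (hb : ContDiff ℝ (⊤ : ℕ∞) b)
    (hc : ContDiff ℝ (⊤ : ℕ∞) c) (p : PC) :
    gradForm a (fun q => b q + c q) p = gradForm a b p + gradForm a c p := by
  unfold gradForm
  rw [fderiv_add_apply hb hc, fderiv_add_apply hb hc]
  ring

lemma gradForm_mul_right (a : PC → ℝ) {b c : PC → ℝ} (hb : ContDiff ℝ (⊤ : ℕ∞) b)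
    (hc : ContDiff ℝ (⊤ : ℕ∞) c) (p : PC) :
    gradForm a (fun q => b q * c q) p = b p * gradForm a c p + c p * gradForm a b p := by
  unfold gradForm
  rw [fderiv_mul_apply hb hc, fderiv_mul_apply hb hc]
  ring

lemma fderiv_fderiv_apply_comm {a : PC → ℝ} (ha : ContDiff ℝ (⊤ : ℕ∞) a) (p e e' : PC) :
    fderiv ℝ (fun q => fderiv ℝ a q e) p e' = fderiv ℝ (fun q => fderiv ℝ a q e') p e := by
  have hd : DifferentiableAt ℝ (fderiv ℝ a) p :=
    ((ha.fderiv_right (m := (⊤ : ℕ∞)) (by simp)).differentiable (by simp)) p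
  have hs : IsSymmSndFDerivAt ℝ a p :=
    ha.contDiffAt.isSymmSndFDerivAt
      (by simpa using (by exact_mod_cast le_top : ((2 : ℕ∞) : WithTop ℕ∞) ≤ ((⊤ : ℕ∞) : WithTop ℕ∞)))
  rw [fderiv_clm_apply hd (differentiableAt_const e),
    fderiv_clm_apply hd (differentiableAt_const e')]
  simpa using hs e' e

lemma fderiv_prodMk_apply {a b : PC → ℝ} (ha : ContDiff ℝ (⊤ : ℕ∞) a)
    (hb : ContDiff ℝ (⊤ : ℕ∞) b) (p e : PC) :
    fderiv ℝ (fun q => ((a q, b q) : PC)) p e = (fderiv ℝ a p e, fderiv ℝ b p e) := by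
  rw [(ha.differentiable_of_top p).fderiv_prodMk (hb.differentiable_of_top p)]
  rfl

lemma Dz_prodMk {a b : PC → ℝ} (ha : ContDiff ℝ (⊤ : ℕ∞) a)
    (hb : ContDiff ℝ (⊤ : ℕ∞) b) (p : PC) :
    Dz (fun q => ((a q, b q) : PC)) p =
      ((1 / 2) * (fderiv ℝ a p (1, 0) + fderiv ℝ b p (0, 1)),
        (1 / 2) * (fderiv ℝ b p (1, 0) + fderiv ℝ a p (0, 1))) := by
  simp [Dz, dX, dY, fderiv_prodMk_apply ha hb, pmul, pj]

lemma Dzbar_prodMk {a b : PC → ℝ} (ha : ContDiff ℝ (⊤ : ℕ∞) a)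
    (hb : ContDiff ℝ (⊤ : ℕ∞) b) (p : PC) :
    Dzbar (fun q => ((a q, b q) : PC)) p =
      ((1 / 2) * (fderiv ℝ a p (1, 0) - fderiv ℝ b p (0, 1)),
        (1 / 2) * (fderiv ℝ b p (1, 0) - fderiv ℝ a p (0, 1))) := by
  simp [Dzbar, dX, dY, fderiv_prodMk_apply ha hb, pmul, pj]

lemma Dzbar_Dz_prodMk {a b : PC → ℝ} (ha : ContDiff ℝ (⊤ : ℕ∞) a)
    (hb : ContDiff ℝ (⊤ : ℕ∞) b) (p : PC) :
    Dzbar (fun q => Dz (fun r => ((a r, b r) : PC)) q) p =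
      ((1 / 4) * waveOp a p, (1 / 4) * waveOp b p) := by
  have hax := contDiff_fderiv_apply_const ha (1, 0)
  have hay := contDiff_fderiv_apply_const ha (0, 1)
  have hbx := contDiff_fderiv_apply_const hb (1, 0)
  have hby := contDiff_fderiv_apply_const hb (0, 1)
  have hc : ContDiff ℝ (⊤ : ℕ∞) (fun _ : PC => (1 / 2 : ℝ)) := contDiff_const
  simp_rw [Dz_prodMk ha hb]
  rw [Dzbar_prodMk (hc.mul (hax.add hby)) (hc.mul (hbx.add hay))]
  simp only [fderiv_mul_apply hc (hax.add hby), fderiv_mul_apply hc (hbx.add hay),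
    fderiv_add_apply hax hby, fderiv_add_apply hbx hay, fderiv_fun_const]
  have h1 := fderiv_fderiv_apply_comm ha p (1, 0) (0, 1)
  have h2 := fderiv_fderiv_apply_comm hb p (1, 0) (0, 1)
  unfold waveOp secondDeriv
  ext
  · simp only [Pi.zero_apply, zero_apply]
    linear_combination (-1 / 4) * h2
  · simp only [Pi.zero_apply, zero_apply]
    linear_combination (-1 / 4) * h1

lemma waveOp_const_mul (c : ℝ) {a : PC → ℝ} (ha : ContDiff ℝ (⊤ : ℕ∞) a) (p : PC) :
    waveOp (fun q => c * a q) p = c * waveOp a p := by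
  rw [waveOp_mul contDiff_const ha, waveOp_const, gradForm_comm, gradForm_const]
  ring

lemma gradForm_const_mul_right (a : PC → ℝ) (c : ℝ) {b : PC → ℝ}
    (hb : ContDiff ℝ (⊤ : ℕ∞) b) (p : PC) :
    gradForm a (fun q => c * b q) p = c * gradForm a b p := by
  rw [gradForm_mul_right a contDiff_const hb, gradForm_const]
  ring

/-- Quotient rule for the wave operator, with denominators cleared. -/
lemma pow_three_mul_waveOp_mul_inv {c w : PC → ℝ} (hc : ContDiff ℝ (⊤ : ℕ∞) c)
    (hw : ContDiff ℝ (⊤ : ℕ∞) w) (h0 : ∀ q, w q ≠ 0) (p : PC) :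
    w p ^ 3 * waveOp (fun q => c q * (w q)⁻¹) p = w p ^ 2 * waveOp c p
      - 2 * w p * gradForm w c p + c p * (2 * gradForm w w p - w p * waveOp w p) := by
  have hn : ContDiff ℝ (⊤ : ℕ∞) (fun q => c q * (w q)⁻¹) := hc.mul (hw.inv h0)
  have hcn : c = fun q => (c q * (w q)⁻¹) * w q :=
    funext fun q => (inv_mul_cancel_right₀ (h0 q) _).symm
  have h1 := waveOp_mul hn hw p
  have h2 := gradForm_mul_right w hn hw p
  rw [← hcn] at h1 h2
  rw [h1, h2, gradForm_comm _ w]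
  linear_combination (w p * waveOp w p - 2 * gradForm w w p) * congrFun hcn p

/-- The real content of the equivalence: `(a, b)` is the point `(u, v)`, `w = 1 + u² − v²`, and
`N₁, N₂, N₃` are the images of the components of `ν` under the wave operator. -/
lemma exists_proportional_iff {a b w A B P Q R N₁ N₂ N₃ : ℝ}
    (hw : w = 1 + a ^ 2 - b ^ 2)
    (h0 : w ≠ 0) {ww bw : ℝ} (hbw : bw = 2 * a * A + 2 * P - 2 * b * B - 2 * Q)
    (h₁ : w ^ 3 * N₁ = w ^ 2 * (2 * A) - 2 * w * (2 * (2 * a * P - 2 * b * R))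
      + 2 * a * (2 * ww - w * bw))
    (h₂ : w ^ 3 * N₂ = w ^ 2 * (2 * B) - 2 * w * (2 * (2 * a * R - 2 * b * Q))
      + 2 * b * (2 * ww - w * bw))
    (h₃ : w ^ 3 * N₃ = w ^ 2 * (-bw) + 2 * w * ww + (2 - w) * (2 * ww - w * bw))
    (hww : ww = 4 * (a ^ 2 * P - 2 * a * b * R + b ^ 2 * Q)) :
    (∃ ρ : ℝ, 1 / 4 * N₁ = ρ * (2 * a * w⁻¹) ∧ 1 / 4 * N₂ = ρ * (2 * b * w⁻¹) ∧
        1 / 4 * N₃ = ρ * ((2 - w) * w⁻¹)) ↔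
      w * A = 2 * (a * (P + Q) - 2 * b * R) ∧ w * B = 2 * (2 * a * R - b * (P + Q)) := by
  constructor
  · rintro ⟨ρ, e₁, e₂, e₃⟩
    have hc (N c : ℝ) (h : 1 / 4 * N = ρ * (c * w⁻¹)) : w ^ 3 * N = 4 * ρ * w ^ 2 * c := by
      field_simp at h
      linear_combination w ^ 2 * h
    rw [hc _ _ e₁] at h₁
    rw [hc _ _ e₂] at h₂
    rw [hc _ _ e₃] at h₃
    have hw2 : 2 * w ^ 2 ≠ 0 := by positivity
    clear hc e₁ e₂ e₃
    subst hbw hww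
    constructor <;> apply mul_left_cancel₀ hw2 <;> subst hw
    · linear_combination (-(1 + a ^ 2 - b ^ 2 - 2 * a ^ 2)) * h₁ - 2 * a * b * h₂ + 2 * a * h₃
    · linear_combination 2 * a * b * h₁ - (1 + a ^ 2 - b ^ 2 + 2 * b ^ 2) * h₂ + 2 * b * h₃
  · rintro ⟨E₁, E₂⟩
    have hc (N c : ℝ) (h : w ^ 3 * N = -4 * (P - Q) * c) :
        1 / 4 * N = -(P - Q) / w ^ 2 * (c * w⁻¹) := by
      field_simp
      linear_combination h
    subst hbw hww
    refine ⟨-(P - Q) / w ^ 2, hc _ _ (h₁.trans ?_), hc _ _ (h₂.trans ?_), hc _ _ (h₃.trans ?_)⟩ <;>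
      clear hc h₁ h₂ h₃ <;> subst hw
    · linear_combination
        (2 * (1 + a ^ 2 - b ^ 2) - 4 * a ^ 2) * E₁ + 4 * a * b * E₂
    · linear_combination
        (2 * (1 + a ^ 2 - b ^ 2) + 4 * b ^ 2) * E₂ - 4 * a * b * E₁
    · linear_combination (-4 * a) * E₁ + 4 * b * E₂

/-- `ν_{zz̄}` is a real multiple of `ν` at every point of `D` iff `g` satisfies the
harmonic map equation `g_{zz̄} − (2ḡ/(1+|g|²))g_z g_z̄ = 0` and its conjugate, assuming
the generic-position (pointwise linear independence) hypothesis. -/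
theorem stmt_12 (D : Set PC) (hD : IsOpen D) (g : PC → PC) (hg : ContDiff ℝ (⊤ : ℕ∞) g)
    (hinv : ∀ p, 1 + pnormSq (g p) ≠ 0)
    (hindep : ∀ p ∈ D, ∀ a b : PC, ∀ ρ : ℝ,
      (∀ i, pmul a (V1 g p i) + pmul b (V2 g p i) = ρ • nuC g p i) → a = 0 ∧ b = 0) :
    (∀ p ∈ D, ∃ ρ : ℝ, ∀ i,
        Dzbar (fun q => Dz (fun r => nuC g r i) q) p = ρ • nuC g p i) ↔
    (∀ p ∈ D,
        Dzbar (fun q => Dz g q) p =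
          (2 / (1 + pnormSq (g p))) • pmul (pconj (g p)) (pmul (Dz g p) (Dzbar g p)) ∧
        Dzbar (fun q => Dz (fun r => pconj (g r)) q) p =
          (2 / (1 + pnormSq (g p))) •
            pmul (g p) (pmul (Dz (fun r => pconj (g r)) p)
              (Dzbar (fun r => pconj (g r)) p))) := by
  have hu : ContDiff ℝ (⊤ : ℕ∞) (fun q => (g q).1) := contDiff_fst.comp hg
  have hv : ContDiff ℝ (⊤ : ℕ∞) (fun q => (g q).2) := contDiff_snd.comp hg
  generalize hU : (fun q => (g q).1) = u at hu
  generalize hV : (fun q => (g q).2) = v at hv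
  have hgq : ∀ q, g q = (u q, v q) := fun q => by subst hU hV; rfl
  obtain rfl : g = fun q => (u q, v q) := funext hgq
  clear hU hV hgq hindep
  have hk (c : ℝ) : ContDiff ℝ (⊤ : ℕ∞) (fun _ : PC => c) := contDiff_const
  have huu := hu.mul hu
  have hvv := hv.mul hv
  have hvv' := (hk (-1)).mul hvv
  have hw := (hk 1).add (huu.add hvv')
  have hbw (p : PC) : waveOp (fun q => 1 + (u q * u q + (-1) * (v q * v q))) p =
      2 * u p * waveOp u p + 2 * gradForm u u p - 2 * v p * waveOp v p - 2 * gradForm v v p := by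
    rw [waveOp_add (hk 1) (huu.add hvv'), waveOp_add huu hvv', waveOp_const_mul _ hvv,
      waveOp_mul hu hu, waveOp_mul hv hv, waveOp_const]
    ring
  have hgw (a : PC → ℝ) (p : PC) :
      gradForm a (fun q => 1 + (u q * u q + (-1) * (v q * v q))) p =
        2 * u p * gradForm a u p - 2 * v p * gradForm a v p := by
    rw [gradForm_add_right a (hk 1) (huu.add hvv'), gradForm_add_right a huu hvv',
      gradForm_const_mul_right a _ hvv, gradForm_mul_right a hu hu,
      gradForm_mul_right a hv hv, gradForm_const]
    ring
  have hwn (q : PC) : 1 + pnormSq (u q, v q) = 1 + (u q * u q + (-1) * (v q * v q)) := by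
    simp only [pnormSq]; ring
  generalize hwe : (fun q => 1 + (u q * u q + (-1) * (v q * v q))) = w at hw hbw hgw
  have hwq (q : PC) : 1 + (u q * u q + (-1) * (v q * v q)) = w q := congrFun hwe q
  have hws (q : PC) : w q = 1 + u q ^ 2 - v q ^ 2 := by rw [← hwq]; ring
  clear hwe
  simp only [hwn, hwq] at hinv ⊢
  have hcu := (hk 2).mul hu
  have hcv := (hk 2).mul hv
  have hcw' := (hk (-1)).mul hw
  have hcw := (hk 2).add hcw'
  have hi := hw.inv hinv
  have hnu0 (q : PC) : nuC (fun q => (u q, v q)) q 0 = (2 * u q * (w q)⁻¹, 0) := by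
    simp only [nuC, hwn, hwq]
    ext <;> simp [pconj] <;> ring
  have hnu1 (q : PC) : nuC (fun q => (u q, v q)) q 1 = (2 * v q * (w q)⁻¹, 0) := by
    simp only [nuC, hwn, hwq]
    ext <;> simp [pconj, pj, pmul] <;> ring
  have hnu2 (q : PC) : nuC (fun q => (u q, v q)) q 2 = ((2 + (-1) * w q) * (w q)⁻¹, 0) := by
    simp only [nuC, hwn, hwq]
    ext <;> simp [hws, pnormSq] <;> ring
  refine forall₂_congr fun p _ => ?_
  have e1 := pow_three_mul_waveOp_mul_inv hcu hw hinv p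
  have e2 := pow_three_mul_waveOp_mul_inv hcv hw hinv p
  have e3 := pow_three_mul_waveOp_mul_inv hcw hw hinv p
  have hww : gradForm w w p = 4 * (u p ^ 2 * gradForm u u p - 2 * u p * v p * gradForm u v p
      + v p ^ 2 * gradForm v v p) := by
    rw [hgw, gradForm_comm w u, gradForm_comm w v, hgw, hgw, gradForm_comm v u]
    ring
  rw [waveOp_const_mul _ hu, gradForm_const_mul_right _ _ hu, gradForm_comm w u, hgw u] at e1
  rw [waveOp_const_mul _ hv, gradForm_const_mul_right _ _ hv, gradForm_comm w v, hgw v,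
    gradForm_comm v u] at e2
  rw [waveOp_add (hk 2) hcw', waveOp_const_mul _ hw, waveOp_const,
    gradForm_add_right _ (hk 2) hcw', gradForm_const_mul_right _ _ hw, gradForm_const] at e3
  have e3' : w p ^ 3 * waveOp (fun q => (2 + (-1) * w q) * (w q)⁻¹) p =
      w p ^ 2 * (-waveOp w p) + 2 * w p * gradForm w w p
        + (2 - w p) * (2 * gradForm w w p - w p * waveOp w p) := by
    rw [e3]; ring
  have key := exists_proportional_iff (hws p) (hinv p) (hbw p) e1 e2
    e3' hww
  have hvm : ContDiff ℝ (⊤ : ℕ∞) (fun q => -v q) := hv.neg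
  have hwv : waveOp (fun q => -v q) p = -waveOp v p := by
    simpa using waveOp_const_mul (-1) hv p
  have hfv (e : PC) : fderiv ℝ (fun q => -v q) p e = -fderiv ℝ v p e := by
    rw [fderiv_fun_neg]; rfl
  have d1 : Dzbar (fun q => Dz (fun r => (2 * u r * (w r)⁻¹, 0)) q) p = _ :=
    Dzbar_Dz_prodMk (hcu.mul hi) (hk 0) p
  have d2 : Dzbar (fun q => Dz (fun r => (2 * v r * (w r)⁻¹, 0)) q) p = _ :=
    Dzbar_Dz_prodMk (hcv.mul hi) (hk 0) p
  have d3 : Dzbar (fun q => Dz (fun r => ((2 + (-1) * w r) * (w r)⁻¹, 0)) q) p = _ :=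
    Dzbar_Dz_prodMk (hcw.mul hi) (hk 0) p
  simp only [Fin.forall_fin_succ, Fin.succ_zero_eq_one, Fin.succ_one_eq_two, hnu0, hnu1, hnu2,
    IsEmpty.forall_iff, and_true, pconj]
  rw [d1, d2, d3, Dzbar_Dz_prodMk hu hv, Dzbar_Dz_prodMk hu hvm]
  simp only [waveOp_const, Dz_prodMk hu hv, Dz_prodMk hu hvm, Dzbar_prodMk hu hv,
    Dzbar_prodMk hu hvm, hwv, hfv, Prod.smul_mk, smul_eq_mul, mul_zero, Prod.mk.injEq, and_true,
    pmul, neg_one_mul, ← sub_eq_add_neg] at key ⊢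
  refine key.trans ?_
  have hp := hinv p
  unfold gradForm
  constructor
  · rintro ⟨E₁, E₂⟩
    refine ⟨⟨?_, ?_⟩, ?_, ?_⟩ <;> field_simp
    · linear_combination 2 * E₁
    · linear_combination 2 * E₂
    · linear_combination 2 * E₁
    · linear_combination (-2) * E₂
  · rintro ⟨⟨E₁, E₂⟩, -⟩
    field_simp at E₁ E₂
    constructor
    · linear_combination (1 / 2) * E₁
    · linear_combination (1 / 2) * E₂
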